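/- Let φ : ℝ → ℝ be infinitely differentiable and let s₀ ∈ ℝ. Suppose there exist an even natural number i₀, a real δ > 0 and a real C ≥ 0 such that every smooth 1-periodic function u : ℝ → ℝ with ‖u‖_{i₀} < δ satisfies sup_{s ∈ ℝ} |iteratedDeriv (i₀+1) (fun s => deriv φ (s₀ + u s)) s| ≤ C. Then deriv (deriv φ) s₀ = 0. -/

import Mathlib

open scoped Nat in
lemma aux_bound (g : ℝ → ℝ) (hg : ContDiff ℝ (⊤ : ℕ∞) g) (s₀ : ℝ) (n : ℕ) :
    ∃ M : ℝ, ∀ u : ℝ → ℝ, ContDiff ℝ (⊤ : ℕ∞) u → u 0 = 0 →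
      (∀ l : ℕ, l ≤ n → |iteratedDeriv l u 0| ≤ 1) →
      |iteratedDeriv (n + 1) (fun s => g (s₀ + u s)) 0
        - deriv g s₀ * iteratedDeriv (n + 1) u 0| ≤ M := by
  have hg' : ContDiff ℝ (⊤ : ℕ∞) (deriv g) := (contDiff_infty_iff_deriv.1 hg).2
  set K : ℝ := ∑ i ∈ Finset.range (n + 1), ‖iteratedFDeriv ℝ i (deriv g) s₀‖ with hK
  refine ⟨∑ j ∈ Finset.range n, (n.choose (j + 1) : ℝ) * ((j + 1)! * K * 1 ^ (j + 1)), ?_⟩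
  intro u hu hu0 hb
  have hu' : ContDiff ℝ (⊤ : ℕ∞) (deriv u) := (contDiff_infty_iff_deriv.1 hu).2
  have hv : ContDiff ℝ (⊤ : ℕ∞) (fun s => s₀ + u s) := contDiff_const.add hu
  have hcomp : ContDiff ℝ (⊤ : ℕ∞) (deriv g ∘ fun s => s₀ + u s) := hg'.comp hv
  have hd : deriv (fun s => g (s₀ + u s)) = (deriv g ∘ fun s => s₀ + u s) * deriv u := by
    ext s
    have h1 : HasDerivAt u (deriv u s) s :=
      (hu.differentiable (by simp) s).hasDerivAt
    have h2 : HasDerivAt g (deriv g (s₀ + u s)) (s₀ + u s) :=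
      (hg.differentiable (by simp) _).hasDerivAt
    exact (h2.comp s (h1.const_add s₀)).deriv
  have hle : ∀ j : ℕ, ((j : ℕ∞) : WithTop ℕ∞) ≤ ((⊤ : ℕ∞) : WithTop ℕ∞) := fun j => by
    exact_mod_cast le_top
  have hL := iteratedDerivWithin_mul (n := n) (Set.mem_univ (0:ℝ)) uniqueDiffOn_univ
    (hcomp.of_le (hle n)).contDiffAt.contDiffWithinAt
    (hu'.of_le (hle n)).contDiffAt.contDiffWithinAt
  simp only [iteratedDerivWithin_univ] at hL
  rw [iteratedDeriv_succ' (f := fun s => g (s₀ + u s)), hd, hL, Finset.sum_range_succ',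
    iteratedDeriv_succ' (f := u)]
  have : (deriv g ∘ fun s => s₀ + u s) 0 = deriv g s₀ := by simp [hu0]
  simp only [Nat.choose_zero_right, iteratedDeriv_zero, Nat.sub_zero, Nat.cast_one, one_mul, this,
    add_sub_cancel_right]
  refine (Finset.abs_sum_le_sum_abs _ _).trans (Finset.sum_le_sum fun j hj => ?_)
  have hjn : j < n := Finset.mem_range.1 hj
  have hA : |iteratedDeriv (j + 1) (deriv g ∘ fun s => s₀ + u s) 0|
      ≤ (j + 1)! * K * 1 ^ (j + 1) := by
    rw [← Real.norm_eq_abs, ← norm_iteratedFDeriv_eq_norm_iteratedDeriv]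
    refine norm_iteratedFDeriv_comp_le hg' hv (hle (j + 1)) 0 ?_ ?_
    · intro i hi
      simp only [hu0, add_zero]
      exact Finset.single_le_sum (f := fun i => ‖iteratedFDeriv ℝ i (deriv g) s₀‖)
        (fun _ _ => norm_nonneg _) (Finset.mem_range.2 (by omega))
    · intro i hi hi'
      rw [norm_iteratedFDeriv_eq_norm_iteratedDeriv, iteratedDeriv_const_add (by omega), one_pow,
        Real.norm_eq_abs]
      exact hb i (by omega)
  have hB : |iteratedDeriv (n - (j + 1)) (deriv u) 0| ≤ 1 := by
    rw [← iteratedDeriv_succ']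
    exact hb _ (by omega)
  rw [abs_mul, abs_mul, Nat.abs_cast, mul_assoc]
  refine mul_le_mul_of_nonneg_left ?_ (Nat.cast_nonneg _)
  calc _ ≤ ((j + 1)! * K * 1 ^ (j + 1)) * 1 :=
        mul_le_mul hA hB (abs_nonneg _) ((abs_nonneg _).trans hA)
    _ = _ := mul_one _

/-- Pointwise step in the proof of Theorem 11: a uniform bound `C` on the `(i₀+1)`-st
derivative of `φ' ∘ (s₀ + u)` over all smooth 1-periodic `u` with `‖u‖_{i₀} < δ`
(for some even `i₀`) forces `φ'' s₀ = 0`. -/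
theorem stmt1 (φ : ℝ → ℝ) (hφ : ContDiff ℝ (⊤ : ℕ∞) φ) (s₀ : ℝ)
    (h : ∃ i₀ : ℕ, Even i₀ ∧ ∃ δ : ℝ, 0 < δ ∧ ∃ C : ℝ, 0 ≤ C ∧
      ∀ u : ℝ → ℝ, ContDiff ℝ (⊤ : ℕ∞) u → (∀ s : ℝ, u (s + 1) = u s) →
        (∃ r : ℝ, r < δ ∧ ∀ l : ℕ, l ≤ i₀ → ∀ s : ℝ, |iteratedDeriv l u s| ≤ r) →
        ∀ s : ℝ, |iteratedDeriv (i₀ + 1) (fun s => deriv φ (s₀ + u s)) s| ≤ C) :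
    deriv (deriv φ) s₀ = 0 := by
  obtain ⟨n, ⟨m, hm⟩, δ, hδ, C, hC, h⟩ := h
  obtain ⟨M, hM⟩ := aux_bound (deriv φ) (contDiff_infty_iff_deriv.1 hφ).2 s₀ n
  by_contra hne
  set a := deriv (deriv φ) s₀ with ha
  have hapos : 0 < |a| := abs_pos.2 hne
  set r : ℝ := min (δ / 2) 1 with hr
  have hr0 : 0 < r := lt_min (by linarith) one_pos
  have hr1 : r ≤ 1 := min_le_right _ _
  have hrδ : r < δ := (min_le_left _ _).trans_lt (by linarith)
  obtain ⟨k, hk⟩ := exists_nat_gt ((C + M) / (|a| * r))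
  have hpi := Real.pi_gt_three
  set ω : ℝ := ((k + 1 : ℕ) : ℝ) * (2 * Real.pi) with hω
  have hk0 : (0 : ℝ) ≤ k := Nat.cast_nonneg k
  have hωk : (k : ℝ) + 1 ≤ ω := by
    rw [hω]; push_cast; nlinarith
  have hω1 : 1 ≤ ω := by linarith
  have hω0 : 0 < ω := by linarith
  set u : ℝ → ℝ := fun s => r / ω ^ n * Real.sin (ω * s) with hu
  have hder : ∀ l s, iteratedDeriv l u s =
      r / ω ^ n * (ω ^ l * iteratedDeriv l Real.sin (ω * s)) := by
    intro l s
    rw [hu, iteratedDeriv_const_mul_field, iteratedDeriv_comp_const_mul Real.contDiff_sin]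
  have hus : ContDiff ℝ (⊤ : ℕ∞) u :=
    contDiff_const.mul (Real.contDiff_sin.comp (contDiff_const.mul contDiff_id))
  have hper : ∀ s, u (s + 1) = u s := by
    intro s
    simp only [hu]
    rw [mul_add, mul_one, hω, Real.sin_add_nat_mul_two_pi]
  have hbd : ∀ l : ℕ, l ≤ n → ∀ s : ℝ, |iteratedDeriv l u s| ≤ r := by
    intro l hl s
    rw [hder, abs_mul, abs_mul, abs_of_pos (by positivity : 0 < r / ω ^ n),
      abs_of_pos (by positivity : 0 < ω ^ l)]
    calc r / ω ^ n * (ω ^ l * |iteratedDeriv l Real.sin (ω * s)|)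
        ≤ r / ω ^ n * (ω ^ n * 1) := by
          gcongr
          exact Real.abs_iteratedDeriv_sin_le_one l _
      _ = r := by field_simp
  have h1 := h u hus hper ⟨r, hrδ, hbd⟩ 0
  have h2 := hM u hus (by simp [hu]) (fun l hl => (hbd l hl 0).trans hr1)
  have h3 : |iteratedDeriv (n + 1) u 0| = r * ω := by
    rw [hder, hm, ← two_mul, Real.iteratedDeriv_odd_sin]
    simp only [mul_zero, Pi.mul_apply, Pi.pow_apply, Pi.neg_apply, Pi.one_apply, Real.cos_zero,
      mul_one, abs_mul, abs_neg_one_pow]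
    rw [abs_of_pos (by positivity), abs_of_pos (by positivity)]
    field_simp
    exact pow_succ _ _
  have h4 : |a * iteratedDeriv (n + 1) u 0| ≤ C + M := by
    rw [abs_le] at *
    constructor <;> linarith [h1.1, h1.2, h2.1, h2.2]
  rw [abs_mul, h3] at h4
  rw [div_lt_iff₀ (by positivity)] at hk
  have : (k : ℝ) * (|a| * r) ≤ ω * (|a| * r) := by
    gcongr; linarith
  linarith
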